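/- Let S ⊆ ℝⁿ be a convex open set, f : ℝⁿ → ℝⁿ continuously differentiable, M a symmetric positive semidefinite real n×n matrix, and β > 0. Assume (Df(z))ᵀ M + M (Df(z)) ≼ −2βM for all z ∈ S. Then for all x, y ∈ S, (x − y)ᵀ M (f(x) − f(y)) ≤ −β (x − y)ᵀ M (x − y). -/

import Mathlib

open Matrix

/-- The M-norm of a vector: `‖v‖_M = √(vᵀ M v)`. -/
noncomputable def mnorm {n : ℕ} (M : Matrix (Fin n) (Fin n) ℝ) (v : Fin n → ℝ) : ℝ :=
  Real.sqrt (v ⬝ᵥ M.mulVec v)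

/-- The Jacobian of `f` at `z`, as a matrix. -/
noncomputable def jac {n : ℕ} (f : (Fin n → ℝ) → (Fin n → ℝ)) (z : Fin n → ℝ) :
    Matrix (Fin n) (Fin n) ℝ :=
  LinearMap.toMatrix' (fderiv ℝ f z : (Fin n → ℝ) →ₗ[ℝ] (Fin n → ℝ))

/-- Loewner order: `A ≼ B` iff `B - A` is positive semidefinite. -/
def loewnerLE {n : ℕ} (A B : Matrix (Fin n) (Fin n) ℝ) : Prop := (B - A).PosSemidef

/-!
The mean value theorem fails for the vector-valued `f`, but it holds for the scalar function
`z ↦ (x - y)ᵀ M f(z)`: this gives a single point `z ∈ S` with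
`(x - y)ᵀ M (f(x) - f(y)) = (x - y)ᵀ M Df(z) (x - y)`. As `M` is symmetric, the right-hand side is
half the quadratic form of `Df(z)ᵀ M + M Df(z)` at `x - y`.
-/

theorem dotProduct_transpose_mul_add_mul_mulVec {ι R : Type*} [Fintype ι] [CommRing R]
    {M : Matrix ι ι R} (hM : M.IsSymm) (A : Matrix ι ι R) (v : ι → R) :
    v ⬝ᵥ (Aᵀ * M + M * A) *ᵥ v = 2 * (v ⬝ᵥ M *ᵥ A *ᵥ v) := by
  have htranspose : Aᵀ * M = (M * A)ᵀ := by rw [transpose_mul, hM.eq]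
  rw [htranspose, add_mulVec, dotProduct_add, dotProduct_transpose_mulVec, ← mulVec_mulVec, two_mul]

section Jacobian

variable {n : ℕ}

theorem jac_mulVec (f : (Fin n → ℝ) → (Fin n → ℝ)) (z v : Fin n → ℝ) :
    jac f z *ᵥ v = fderiv ℝ f z v :=
  LinearMap.toMatrix'_mulVec _ v

theorem loewnerLE.dotProduct_mulVec_le {A B : Matrix (Fin n) (Fin n) ℝ} (h : loewnerLE A B)
    (v : Fin n → ℝ) : v ⬝ᵥ A *ᵥ v ≤ v ⬝ᵥ B *ᵥ v := by
  simpa only [star_trivial, sub_mulVec, dotProduct_sub, sub_nonneg] using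
    h.dotProduct_mulVec_nonneg v

theorem dotProduct_mulVec_fderiv_le {f : (Fin n → ℝ) → (Fin n → ℝ)} {z : Fin n → ℝ}
    {M : Matrix (Fin n) (Fin n) ℝ} (hM : M.IsSymm) {β : ℝ}
    (h : loewnerLE ((jac f z)ᵀ * M + M * jac f z) ((-(2 * β)) • M)) (v : Fin n → ℝ) :
    v ⬝ᵥ M *ᵥ fderiv ℝ f z v ≤ -β * (v ⬝ᵥ M *ᵥ v) := by
  have hquad := h.dotProduct_mulVec_le v
  rw [dotProduct_transpose_mul_add_mul_mulVec hM, jac_mulVec, smul_mulVec, dotProduct_smul,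
    smul_eq_mul] at hquad
  linarith

end Jacobian

section MeanValue

variable {E F : Type*} [NormedAddCommGroup E] [NormedSpace ℝ E]
  [NormedAddCommGroup F] [NormedSpace ℝ F] {S : Set E}

theorem exists_mem_segment_apply_sub_eq_apply_fderiv {f : E → F} {f' : E → E →L[ℝ] F}
    (hf : ∀ z ∈ S, HasFDerivWithinAt f (f' z) S z) (hS : Convex ℝ S) (φ : F →L[ℝ] ℝ) {x y : E}
    (hx : x ∈ S) (hy : y ∈ S) :
    ∃ z ∈ segment ℝ x y, φ (f y - f x) = φ (f' z (y - x)) := by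
  simpa using domain_mvt (fun z hz ↦ φ.hasFDerivAt.comp_hasFDerivWithinAt z (hf z hz)) hS hx hy

theorem stmt4_general {f : E → E} {f' : E → E →L[ℝ] E}
    (hf : ∀ z ∈ S, HasFDerivWithinAt f (f' z) S z) (hS : Convex ℝ S) (B : E →L[ℝ] E →L[ℝ] ℝ)
    {β : ℝ} (hB : ∀ z ∈ S, ∀ v, B v (f' z v) ≤ -β * B v v) :
    ∀ x ∈ S, ∀ y ∈ S, B (x - y) (f x - f y) ≤ -β * B (x - y) (x - y) := by
  intro x hx y hy
  obtain ⟨z, hz, hmean⟩ := exists_mem_segment_apply_sub_eq_apply_fderiv hf hS (B (x - y)) hy hx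
  exact hmean.trans_le (hB z (hS.segment_subset hy hx hz) (x - y))

end MeanValue

theorem stmt4 {n : ℕ} (S : Set (Fin n → ℝ)) (hSconv : Convex ℝ S) (hSopen : IsOpen S)
    (f : (Fin n → ℝ) → (Fin n → ℝ)) (hf : ContDiff ℝ 1 f)
    (M : Matrix (Fin n) (Fin n) ℝ) (hMsymm : M.IsSymm) (hMpsd : M.PosSemidef)
    (β : ℝ) (hβ : 0 < β)
    (hcontract : ∀ z ∈ S,
      loewnerLE ((jac f z)ᵀ * M + M * jac f z) ((-(2 * β)) • M)) :
    ∀ x ∈ S, ∀ y ∈ S,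
      (x - y) ⬝ᵥ M.mulVec (f x - f y) ≤ -β * ((x - y) ⬝ᵥ M.mulVec (x - y)) := by
  have hB (v w) : (toLinearMap₂' ℝ M).toContinuousBilinearMap v w = v ⬝ᵥ M *ᵥ w :=
    toLinearMap₂'_apply' M v w
  simp only [← hB]
  exact stmt4_general (fun z _ ↦ (hf.differentiable one_ne_zero z).hasFDerivAt.hasFDerivWithinAt)
    hSconv _ fun z hz v ↦ by
      simpa only [hB] using dotProduct_mulVec_fderiv_le hMsymm (hcontract z hz) v
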